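/- Let c = c₁ + c₂ be a separable nonnegative cost and ζ a pivot measure between μ and ν (i.e., an optimal cardinal flow glues on ζ). Then W_c(μ,ν) = ∫_{X₂} W_{c₁}(μ_{|x₂}, ζ_{|x₂}) dμ₂(x₂) + ∫_{Y₁} W_{c₂}(ζ_{|y₁}, ν_{|y₁}) dν₁(y₁), where μ_{|x₂}, ζ_{|x₂}, ζ_{|y₁}, ν_{|y₁} are conditional laws obtained by disintegration. -/

import Mathlib

open MeasureTheory ProbabilityTheory
open scoped ENNReal ProbabilityTheory

noncomputable section

variable {X₁ X₂ Y₁ Y₂ : Type*} [MeasurableSpace X₁] [MeasurableSpace X₂]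
  [MeasurableSpace Y₁] [MeasurableSpace Y₂]

/-- `π` is a transportation plan (coupling) between `μ` and `ν`. -/
def IsCoupling {A B : Type*} [MeasurableSpace A] [MeasurableSpace B]
    (π : Measure (A × B)) (μ : Measure A) (ν : Measure B) : Prop :=
  π.map Prod.fst = μ ∧ π.map Prod.snd = ν

/-- The minimal transportation (Wasserstein) cost for the cost `c`. -/
noncomputable def Wc {A B : Type*} [MeasurableSpace A] [MeasurableSpace B]
    (c : A → B → ℝ≥0∞) (μ : Measure A) (ν : Measure B) : ℝ≥0∞ :=
  ⨅ π ∈ {π : Measure (A × B) | IsCoupling π μ ν}, ∫⁻ p, c p.1 p.2 ∂π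

/-- `(f1, f2)` is a cardinal flow between `μ ∈ P(X₁ × X₂)` and `ν ∈ P(Y₁ × Y₂)`:
the marginal of `f1` on `X = X₁ × X₂` is `μ`, the marginal of `f2` on `Y = Y₁ × Y₂` is `ν`,
and `f1`, `f2` have the same marginal on `Y₁ × X₂`. -/
def IsCardinalFlow (μ : Measure (X₁ × X₂)) (ν : Measure (Y₁ × Y₂))
    (f1 : Measure ((X₁ × X₂) × Y₁)) (f2 : Measure (X₂ × (Y₁ × Y₂))) : Prop :=
  f1.map Prod.fst = μ ∧ f2.map Prod.snd = ν ∧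
    f1.map (fun p => (p.2, p.1.2)) = f2.map (fun p => (p.2.1, p.1))

/-- The set of cardinal flows between `μ` and `ν`. -/
def Flows (μ : Measure (X₁ × X₂)) (ν : Measure (Y₁ × Y₂)) :
    Set (Measure ((X₁ × X₂) × Y₁) × Measure (X₂ × (Y₁ × Y₂))) :=
  {F | IsProbabilityMeasure F.1 ∧ IsProbabilityMeasure F.2 ∧ IsCardinalFlow μ ν F.1 F.2}

/-- The cardinal flow functional `CT(f¹,f²) = ∫ c₁ df¹ + ∫ c₂ df²`. -/
noncomputable def CT (c₁ : X₁ → Y₁ → ℝ≥0∞) (c₂ : X₂ → Y₂ → ℝ≥0∞)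
    (F : Measure ((X₁ × X₂) × Y₁) × Measure (X₂ × (Y₁ × Y₂))) : ℝ≥0∞ :=
  ∫⁻ q, c₁ q.1.1 q.2 ∂F.1 + ∫⁻ q, c₂ q.1 q.2.2 ∂F.2

/-- `ζ` is a pivot measure between `μ` and `ν` for the separable cost `c₁ + c₂`:
some optimal cardinal flow glues on `ζ`. -/
def IsPivot (μ : Measure (X₁ × X₂)) (ν : Measure (Y₁ × Y₂))
    (c₁ : X₁ → Y₁ → ℝ≥0∞) (c₂ : X₂ → Y₂ → ℝ≥0∞) (ζ : Measure (Y₁ × X₂)) : Prop :=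
  ∃ F ∈ Flows μ ν, F.1.map (fun p => (p.2, p.1.2)) = ζ ∧
    CT c₁ c₂ F = ⨅ G ∈ Flows μ ν, CT c₁ c₂ G

/-!
Gluing the two halves of a cardinal flow along `Y₁ × X₂` identifies `W_c(μ, ν)` with the minimal
cost of a flow. Once the pivot `ζ` is fixed the two halves decouple: the first moves `μ` to `ζ`
without changing `x₂`, the second moves `ζ` to `ν` without changing `y₁`. A transport problem over a
fixed coordinate `s` costs the integral of the fibrewise costs `W_c(κ s, η s)`. That the integral is
a lower bound follows by disintegrating a plan. For the upper bound, measurable selection is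
replaced by compactness: cut the base into countably many measurable cells on which the pair of laws
`(κ s, η s)` varies little, and use on each whole cell a nearly optimal plan taken at a point of the
cell whose cost is nearly minimal there. The resulting plans have marginals converging to the
prescribed ones, so they are tight, and by lower semicontinuity of the cost a limit plan costs no
more than the integral.
-/

open Filter Topology TopologicalSpace

section Preliminaries

variable {S A : Type*}

lemma exists_le_iInf_add {ι : Type*} [Nonempty ι] (w : ι → ℝ≥0∞) {ε : ℝ≥0∞} (hε : ε ≠ 0) :
    ∃ i, w i ≤ (⨅ j, w j) + ε := by
  rcases eq_or_ne (⨅ j, w j) ⊤ with h | h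
  · exact ⟨Classical.arbitrary ι, by simp [h]⟩
  · obtain ⟨i, hi⟩ := exists_lt_of_ciInf_lt (ENNReal.lt_add_right h hε)
    exact ⟨i, hi.le⟩

/-- The law `κ s` of a Markov kernel at a point, as a point of the space of probability measures
with its weak topology. -/
def lawAt [MeasurableSpace S] [MeasurableSpace A] (κ : Kernel S A) [IsMarkovKernel κ] (s : S) :
    ProbabilityMeasure A :=
  ⟨κ s, inferInstance⟩

lemma measurable_lawAt [MeasurableSpace S] [MeasurableSpace A] (κ : Kernel S A)
    [IsMarkovKernel κ] : Measurable (lawAt κ) :=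
  κ.measurable.subtype_mk

lemma exists_measurable_convergenceDetermining [TopologicalSpace A] [SecondCountableTopology A]
    [MeasurableSpace A] [OpensMeasurableSpace A] :
    ∃ Φ : ProbabilityMeasure A → ℕ → ℝ≥0∞, Measurable Φ ∧
      ∀ (P : ℕ → ProbabilityMeasure A) (P' : ProbabilityMeasure A),
        Tendsto (fun n ↦ Φ (P n)) atTop (𝓝 (Φ P')) → Tendsto P atTop (𝓝 P') := by
  have hbasis := isTopologicalBasis_of_subbasis (isBasis_countableBasis A).eq_generateFrom
  set 𝒱 := (fun F ↦ ⋂₀ F) '' {F : Set (Set A) | F.Finite ∧ F ⊆ countableBasis A}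
  have hcount : 𝒱.Countable :=
    (Set.countable_ofPred_finite_subset (countable_countableBasis A)).image _
  have hpi : IsPiSystem 𝒱 := by
    rintro _ ⟨F, hF, rfl⟩ _ ⟨G, hG, rfl⟩ -
    exact ⟨F ∪ G, ⟨hF.1.union hG.1, Set.union_subset hF.2 hG.2⟩, Set.sInter_union F G⟩
  obtain ⟨V, hV⟩ := hcount.exists_eq_range ⟨_, ∅, ⟨Set.finite_empty, Set.empty_subset _⟩, rfl⟩
  have hV_meas : ∀ U ∈ 𝒱, MeasurableSet U := fun U hU ↦ (hbasis.isOpen hU).measurableSet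
  refine ⟨fun P j ↦ (P : Measure A) (V j), ?_, fun P P' hP ↦ ?_⟩
  · refine measurable_pi_lambda _ fun j ↦ ?_
    exact (Measure.measurable_coe (hV_meas _ (hV ▸ Set.mem_range_self j))).comp
      measurable_subtype_coe
  · refine hpi.tendsto_probabilityMeasure_of_tendsto_of_mem hV_meas ?_ ?_
    · intro U hU x hx
      obtain ⟨T, hT, hxT, hTU⟩ := hbasis.exists_subset_of_mem_open hx hU
      exact ⟨T, hT, (hbasis.isOpen hT).mem_nhds hxT, hTU⟩
    · rw [hV]
      rintro _ ⟨j, rfl⟩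
      exact (ENNReal.tendsto_toNNReal (measure_ne_top _ _)).comp (tendsto_pi_nhds.1 hP j)

-- Measurability into `⊤` makes `r` composable with an arbitrary choice of plans.
lemma exists_measurable_top_dist_lt [MeasurableSpace S] [Nonempty S] {E : Type*}
    [PseudoMetricSpace E] [SeparableSpace E] [MeasurableSpace E] [OpensMeasurableSpace E]
    {Φ : S → E} (hΦ : Measurable Φ) (W : S → ℝ≥0∞) {ε : ℝ} (hε : 0 < ε) {δ : ℝ≥0∞} (hδ : δ ≠ 0) :
    ∃ r : S → S, Measurable[_, ⊤] r ∧ ∀ s, dist (Φ (r s)) (Φ s) < ε ∧ W (r s) ≤ W s + δ := by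
  classical
  have : Nonempty E := ‹Nonempty S›.map Φ
  have hcover : ∀ s, ∃ k, Φ s ∈ Metric.ball (denseSeq E k) (ε / 2) := fun s ↦
    (denseRange_denseSeq E).exists_dist_lt (Φ s) (half_pos hε)
  let cell : S → ℕ := fun s ↦ Nat.find (hcover s)
  have hnear : ∀ s, dist (Φ s) (denseSeq E (cell s)) < ε / 2 := fun s ↦ Nat.find_spec (hcover s)
  have hcell : Measurable cell := measurable_find hcover fun k ↦ hΦ measurableSet_ball
  have hrep : ∀ k, ∃ t, ∀ s, cell s = k → cell t = k ∧ W t ≤ W s + δ := by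
    intro k
    by_cases hk : Nonempty {s // cell s = k}
    · obtain ⟨t, ht⟩ := exists_le_iInf_add (fun u : {s // cell s = k} ↦ W u) hδ
      exact ⟨t, fun s hs ↦ ⟨t.2, ht.trans <| add_le_add_left
        (iInf_le (fun u : {s // cell s = k} ↦ W u) ⟨s, hs⟩) δ⟩⟩
    · exact ⟨Classical.arbitrary S, fun s hs ↦ (hk ⟨s, hs⟩).elim⟩
  choose rep hrep using hrep
  refine ⟨rep ∘ cell, fun U _ ↦ hcell (.of_discrete (s := rep ⁻¹' U)),
    fun s ↦ ⟨?_, (hrep _ s rfl).2⟩⟩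
  calc dist (Φ (rep (cell s))) (Φ s)
      ≤ dist (Φ (rep (cell s))) (denseSeq E (cell s)) + dist (Φ s) (denseSeq E (cell s)) :=
        dist_triangle_right _ _ _
    _ < ε / 2 + ε / 2 :=
        add_lt_add (by simpa only [(hrep _ s rfl).1] using hnear (rep (cell s))) (hnear s)
    _ = ε := add_halves ε

lemma exists_seq_tendsto_le_add [MeasurableSpace S] [Nonempty S] {E : Type*} [TopologicalSpace E]
    [PseudoMetrizableSpace E] [SeparableSpace E] [MeasurableSpace E] [OpensMeasurableSpace E]
    {Φ : S → E} (hΦ : Measurable Φ) (W : S → ℝ≥0∞) {δ : ℕ → ℝ≥0∞} (hδ : ∀ n, δ n ≠ 0) :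
    ∃ r : ℕ → S → S, (∀ n, Measurable[_, ⊤] (r n)) ∧
      (∀ s, Tendsto (fun n ↦ Φ (r n s)) atTop (𝓝 (Φ s))) ∧ ∀ n s, W (r n s) ≤ W s + δ n := by
  let := pseudoMetrizableSpacePseudoMetric E
  obtain ⟨ε, -, hε_pos, hε⟩ := exists_seq_strictAnti_tendsto (0 : ℝ)
  choose r hr_meas hr using fun n ↦ exists_measurable_top_dist_lt hΦ W (hε_pos n) (hδ n)
  exact ⟨r, hr_meas, fun s ↦ tendsto_iff_dist_tendsto_zero.2 <|
    squeeze_zero (fun _ ↦ dist_nonneg) (fun n ↦ (hr n s).1.le) hε,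
    fun n s ↦ (hr n s).2⟩

/-- The composition product `ρ ⊗ₘ κ` of a probability measure and a Markov kernel, as a point of
the space of probability measures with its weak topology. -/
def jointLaw [MeasurableSpace S] [MeasurableSpace A] (ρ : Measure S) [IsProbabilityMeasure ρ]
    (κ : Kernel S A) [IsMarkovKernel κ] : ProbabilityMeasure (S × A) :=
  ⟨ρ ⊗ₘ κ, inferInstance⟩

@[simp]
lemma coe_jointLaw [MeasurableSpace S] [MeasurableSpace A] (ρ : Measure S)
    [IsProbabilityMeasure ρ] (κ : Kernel S A) [IsMarkovKernel κ] :
    (jointLaw ρ κ : Measure (S × A)) = ρ ⊗ₘ κ :=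
  rfl

lemma tendsto_jointLaw [TopologicalSpace S] [MeasurableSpace S]
    [TopologicalSpace A] [MeasurableSpace A] [OpensMeasurableSpace A]
    [OpensMeasurableSpace (S × A)] (ρ : Measure S) [IsProbabilityMeasure ρ]
    {κ : ℕ → Kernel S A} [∀ n, IsMarkovKernel (κ n)] {κ' : Kernel S A} [IsMarkovKernel κ']
    (h : ∀ s, Tendsto (fun n ↦ lawAt (κ n) s) atTop (𝓝 (lawAt κ' s))) :
    Tendsto (fun n ↦ jointLaw ρ (κ n)) atTop (𝓝 (jointLaw ρ κ')) := by
  refine ProbabilityMeasure.tendsto_iff_forall_lintegral_tendsto.2 fun g ↦ ?_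
  have hg : Measurable fun z ↦ (g z : ℝ≥0∞) := g.continuous.measurable.coe_nnreal_ennreal
  simp only [coe_jointLaw, Measure.lintegral_compProd hg]
  refine tendsto_lintegral_of_dominated_convergence (fun _ ↦ (nndist g 0 : ℝ≥0∞))
    (fun n ↦ hg.lintegral_kernel_prod_right') (fun n ↦ .of_forall fun s ↦ ?_) (by simp)
    (.of_forall fun s ↦ ?_)
  · calc ∫⁻ a, g (s, a) ∂κ n s ≤ ∫⁻ _, nndist g 0 ∂κ n s :=
          lintegral_mono fun a ↦ ENNReal.coe_le_coe.2 <|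
            BoundedContinuousFunction.NNReal.upper_bound g (s, a)
      _ = nndist g 0 := by simp
  · exact ProbabilityMeasure.tendsto_iff_forall_lintegral_tendsto.1 (h s)
      (g.compContinuous ⟨_, Continuous.prodMk_right s⟩)

lemma lintegral_eq_lintegral_meas_ofReal_lt [MeasurableSpace A] (μ : Measure A) [SFinite μ]
    {c : A → ℝ≥0∞} (hc : Measurable c) :
    ∫⁻ a, c a ∂μ = ∫⁻ t in Set.Ioi (0 : ℝ), μ {a | ENNReal.ofReal t < c a} := by
  have hvol : ∀ x : ℝ≥0∞, volume.restrict (Set.Ioi 0) {t : ℝ | ENNReal.ofReal t < x} = x := by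
    intro x
    rw [Measure.restrict_apply (measurableSet_lt (by fun_prop) (by fun_prop))]
    rcases eq_or_ne x ⊤ with rfl | hx
    · simp
    · have : {t : ℝ | ENNReal.ofReal t < x} ∩ Set.Ioi 0 = Set.Ioo 0 x.toReal := by
        ext t
        simp only [Set.mem_inter_iff, Set.mem_ofPred_eq, Set.mem_Ioi, Set.mem_Ioo]
        rw [and_comm]
        exact and_congr_right fun ht : 0 < t ↦ ENNReal.ofReal_lt_iff_lt_toReal ht.le hx
      rw [this, Real.volume_Ioo, sub_zero, ENNReal.ofReal_toReal hx]
  have hset : MeasurableSet {p : A × ℝ | ENNReal.ofReal p.2 < c p.1} :=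
    measurableSet_lt (by fun_prop) (by fun_prop)
  calc ∫⁻ a, c a ∂μ
      = ∫⁻ a, (volume.restrict (Set.Ioi 0)) (Prod.mk a ⁻¹' {p | ENNReal.ofReal p.2 < c p.1}) ∂μ :=
        lintegral_congr fun a ↦ (hvol (c a)).symm
    _ = (μ.prod (volume.restrict (Set.Ioi 0))) {p | ENNReal.ofReal p.2 < c p.1} :=
        (Measure.prod_apply hset).symm
    _ = _ := Measure.prod_apply_symm hset

lemma lintegral_le_liminf_lintegral [TopologicalSpace A] [HasOuterApproxClosed A]
    [MeasurableSpace A] [OpensMeasurableSpace A] {P : ℕ → ProbabilityMeasure A}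
    {P' : ProbabilityMeasure A} (hP : Tendsto P atTop (𝓝 P')) {c : A → ℝ≥0∞}
    (hc : LowerSemicontinuous c) :
    ∫⁻ a, c a ∂P' ≤ liminf (fun n ↦ ∫⁻ a, c a ∂P n) atTop := by
  simp only [lintegral_eq_lintegral_meas_ofReal_lt _ hc.measurable]
  refine le_trans (lintegral_mono fun t ↦ ?_) (lintegral_liminf_le fun n ↦ ?_)
  · exact ProbabilityMeasure.le_liminf_measure_open_of_tendsto hP (hc.isOpen_preimage _)
  · exact Antitone.measurable fun t u htu ↦ measure_mono fun a ha ↦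
      (ENNReal.ofReal_le_ofReal htu).trans_lt ha

lemma isTightMeasureSet_range_of_tendsto [TopologicalSpace A] [PolishSpace A] [MeasurableSpace A]
    [OpensMeasurableSpace A] {P : ℕ → ProbabilityMeasure A} {P' : ProbabilityMeasure A}
    (hP : Tendsto P atTop (𝓝 P')) : IsTightMeasureSet (Set.range fun n ↦ (P n : Measure A)) := by
  let := upgradeIsCompletelyMetrizable A
  have hcomp : IsCompact (closure (insert P' (Set.range P))) :=
    hP.isCompact_insert_range.closure
  refine (isTightMeasureSet_of_isCompact_closure hcomp).subset ?_
  rintro _ ⟨n, rfl⟩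
  exact ⟨P n, .inr ⟨n, rfl⟩, rfl⟩

end Preliminaries

section Couplings

variable {A B : Type*} [MeasurableSpace A] [MeasurableSpace B]
  {π : Measure (A × B)} {μ : Measure A} {ν : Measure B}

lemma IsCoupling.isProbabilityMeasure [IsProbabilityMeasure μ] (h : IsCoupling π μ ν) :
    IsProbabilityMeasure π :=
  have : IsProbabilityMeasure (π.map Prod.fst) := h.1 ▸ ‹_›
  Measure.isProbabilityMeasure_of_map Prod.fst

lemma isCoupling_prod [IsProbabilityMeasure μ] [IsProbabilityMeasure ν] :
    IsCoupling (μ.prod ν) μ ν :=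
  ⟨measurePreserving_fst.map_eq, measurePreserving_snd.map_eq⟩

lemma Wc_le (c : A → B → ℝ≥0∞) (h : IsCoupling π μ ν) : Wc c μ ν ≤ ∫⁻ p, c p.1 p.2 ∂π :=
  iInf₂_le π h

lemma exists_isCoupling_lintegral_le_Wc_add (c : A → B → ℝ≥0∞) (μ : Measure A) (ν : Measure B)
    [IsProbabilityMeasure μ] [IsProbabilityMeasure ν] {ε : ℝ≥0∞} (hε : ε ≠ 0) :
    ∃ π, IsCoupling π μ ν ∧ ∫⁻ p, c p.1 p.2 ∂π ≤ Wc c μ ν + ε := by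
  have : Nonempty {π : Measure (A × B) // IsCoupling π μ ν} := ⟨_, isCoupling_prod⟩
  obtain ⟨π, hπ⟩ := exists_le_iInf_add
    (fun π : {π : Measure (A × B) // IsCoupling π μ ν} ↦ ∫⁻ p, c p.1 p.2 ∂π.1) hε
  exact ⟨π, π.2, hπ.trans_eq (by rw [iInf_subtype]; rfl)⟩

end Couplings

section FibredCouplings

variable {S A B : Type*} [MeasurableSpace S] [MeasurableSpace A] [MeasurableSpace B]

/-- `f` couples `m` and `n` over their common first coordinate: its marginals on `S × A` and on
`S × B` are `m` and `n`. These are the two halves of a cardinal flow, up to the order of factors. -/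
def IsCouplingOver (f : Measure (S × (A × B))) (m : Measure (S × A)) (n : Measure (S × B)) :
    Prop :=
  f.map (Prod.map id Prod.fst) = m ∧ f.map (Prod.map id Prod.snd) = n

/-- The minimal cost of transporting `m` to `n` without moving the common first coordinate. -/
def WcOver (c : A → B → ℝ≥0∞) (m : Measure (S × A)) (n : Measure (S × B)) : ℝ≥0∞ :=
  ⨅ f ∈ {f : Measure (S × (A × B)) | IsCouplingOver f m n}, ∫⁻ z, c z.2.1 z.2.2 ∂f

namespace IsCouplingOver

variable {f : Measure (S × (A × B))} {m : Measure (S × A)} {n : Measure (S × B)}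

lemma isProbabilityMeasure [IsProbabilityMeasure m] (h : IsCouplingOver f m n) :
    IsProbabilityMeasure f :=
  have : IsProbabilityMeasure (f.map (Prod.map id Prod.fst)) := h.1 ▸ ‹_›
  Measure.isProbabilityMeasure_of_map (Prod.map id Prod.fst)

lemma WcOver_le (h : IsCouplingOver f m n) (c : A → B → ℝ≥0∞) :
    WcOver c m n ≤ ∫⁻ z, c z.2.1 z.2.2 ∂f :=
  iInf₂_le f h

end IsCouplingOver

lemma isCouplingOver_compProd {ρ : Measure S} [SFinite ρ] {K : Kernel S (A × B)}
    [IsSFiniteKernel K] {κ : Kernel S A} {η : Kernel S B}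
    (h : ∀ s, IsCoupling (K s) (κ s) (η s)) :
    IsCouplingOver (ρ ⊗ₘ K) (ρ ⊗ₘ κ) (ρ ⊗ₘ η) := by
  have hκ : K.map Prod.fst = κ := by
    ext1 s
    rw [Kernel.map_apply _ measurable_fst, (h s).1]
  have hη : K.map Prod.snd = η := by
    ext1 s
    rw [Kernel.map_apply _ measurable_snd, (h s).2]
  exact ⟨by rw [← hκ, Measure.compProd_map measurable_fst],
    by rw [← hη, Measure.compProd_map measurable_snd]⟩

lemma exists_isCouplingOver [StandardBorelSpace A] [Nonempty A] [StandardBorelSpace B] [Nonempty B]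
    (m : Measure (S × A)) (n : Measure (S × B)) [IsFiniteMeasure m] [IsFiniteMeasure n]
    (h : m.fst = n.fst) : ∃ f, IsCouplingOver f m n := by
  have hf := isCouplingOver_compProd (ρ := m.fst) (K := m.condKernel ×ₖ n.condKernel) fun s ↦
    (Kernel.prod_apply m.condKernel n.condKernel s).symm ▸ isCoupling_prod
  rw [m.disintegrate m.condKernel, h, n.disintegrate n.condKernel] at hf
  exact ⟨_, hf⟩

lemma lintegral_Wc_le_WcOver [StandardBorelSpace A] [Nonempty A] [StandardBorelSpace B] [Nonempty B]
    (ρ : Measure S) [IsProbabilityMeasure ρ] (κ : Kernel S A) (η : Kernel S B) [IsMarkovKernel κ]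
    [IsFiniteKernel η] {c : A → B → ℝ≥0∞} (hc : Measurable fun p : A × B ↦ c p.1 p.2) :
    ∫⁻ s, Wc c (κ s) (η s) ∂ρ ≤ WcOver c (ρ ⊗ₘ κ) (ρ ⊗ₘ η) := by
  refine le_iInf₂ fun f (hf : IsCouplingOver f _ _) ↦ ?_
  have := hf.isProbabilityMeasure
  have hfst : f.fst = ρ := by
    rw [← Measure.fst_compProd ρ κ, ← hf.1, Measure.fst, Measure.fst,
      Measure.map_map measurable_fst (by fun_prop)]
    rfl
  have hdis : ρ ⊗ₘ f.condKernel = f := hfst ▸ f.disintegrate f.condKernel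
  have hκ : f.condKernel.map Prod.fst =ᵐ[ρ] κ := Kernel.ae_eq_of_compProd_eq <| by
    rw [Measure.compProd_map measurable_fst, hdis, hf.1]
  have hη : f.condKernel.map Prod.snd =ᵐ[ρ] η := Kernel.ae_eq_of_compProd_eq <| by
    rw [Measure.compProd_map measurable_snd, hdis, hf.2]
  calc ∫⁻ s, Wc c (κ s) (η s) ∂ρ
      ≤ ∫⁻ s, ∫⁻ p, c p.1 p.2 ∂f.condKernel s ∂ρ := by
        refine lintegral_mono_ae ?_
        filter_upwards [hκ, hη] with s hκs hηs
        exact Wc_le c ⟨by rw [← hκs, Kernel.map_apply _ measurable_fst],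
          by rw [← hηs, Kernel.map_apply _ measurable_snd]⟩
    _ = ∫⁻ z, c z.2.1 z.2.2 ∂(ρ ⊗ₘ f.condKernel) :=
        (Measure.lintegral_compProd (f := fun z : S × (A × B) ↦ c z.2.1 z.2.2)
          (hc.comp measurable_snd)).symm
    _ = ∫⁻ z, c z.2.1 z.2.2 ∂f := by rw [hdis]

lemma exists_seq_kernel_isCoupling_lintegral_le [Nonempty S]
    [TopologicalSpace A] [SecondCountableTopology A] [OpensMeasurableSpace A]
    [TopologicalSpace B] [SecondCountableTopology B] [OpensMeasurableSpace B]
    (κ : Kernel S A) (η : Kernel S B) [IsMarkovKernel κ] [IsMarkovKernel η]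
    (c : A → B → ℝ≥0∞) {δ : ℕ → ℝ≥0∞} (hδ : ∀ n, δ n ≠ 0) :
    ∃ (r : ℕ → S → S) (K : ℕ → Kernel S (A × B)), (∀ n, Measurable (r n)) ∧
      (∀ s, Tendsto (fun n ↦ lawAt κ (r n s)) atTop (𝓝 (lawAt κ s))) ∧
      (∀ s, Tendsto (fun n ↦ lawAt η (r n s)) atTop (𝓝 (lawAt η s))) ∧
      (∀ n s, IsCoupling (K n s) (κ (r n s)) (η (r n s))) ∧
      ∀ n s, ∫⁻ p, c p.1 p.2 ∂K n s ≤ Wc c (κ s) (η s) + δ n := by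
  obtain ⟨Φ, hΦ_meas, hΦ⟩ := exists_measurable_convergenceDetermining (A := A)
  obtain ⟨Ψ, hΨ_meas, hΨ⟩ := exists_measurable_convergenceDetermining (A := B)
  have hδ₂ : ∀ n, δ n / 2 ≠ 0 := fun n ↦ (ENNReal.half_pos (hδ n)).ne'
  obtain ⟨r, hr_meas, hr, hr_le⟩ := exists_seq_tendsto_le_add
    ((hΦ_meas.comp (measurable_lawAt κ)).prodMk (hΨ_meas.comp (measurable_lawAt η)))
    (fun s ↦ Wc c (κ s) (η s)) hδ₂
  choose π hπ hπ_le using fun n s ↦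
    exists_isCoupling_lintegral_le_Wc_add c (κ s) (η s) (hδ₂ n)
  refine ⟨r, fun n ↦ ⟨fun s ↦ π n (r n s), ?_⟩, ?_, fun s ↦ ?_, fun s ↦ ?_,
    fun n s ↦ hπ n (r n s), fun n s ↦ ?_⟩
  · exact fun U _ ↦ hr_meas n (t := π n ⁻¹' U) MeasurableSpace.measurableSet_top
  · exact fun n ↦ (hr_meas n).mono le_rfl le_top
  · exact hΦ _ _ (hr s).fst_nhds
  · exact hΨ _ _ (hr s).snd_nhds
  · calc ∫⁻ p, c p.1 p.2 ∂π n (r n s) ≤ Wc c (κ (r n s)) (η (r n s)) + δ n / 2 := hπ_le n _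
      _ ≤ Wc c (κ s) (η s) + δ n / 2 + δ n / 2 := by gcongr; exact hr_le n s
      _ = Wc c (κ s) (η s) + δ n := by rw [add_assoc, ENNReal.add_halves]

section Topology

variable [TopologicalSpace S] [PolishSpace S] [BorelSpace S] [TopologicalSpace A] [PolishSpace A]
  [BorelSpace A] [TopologicalSpace B] [PolishSpace B] [BorelSpace B]

lemma IsCouplingOver.exists_subseq_tendsto {f : ℕ → ProbabilityMeasure (S × (A × B))}
    {m : ℕ → ProbabilityMeasure (S × A)} {m' : ProbabilityMeasure (S × A)}
    {n : ℕ → ProbabilityMeasure (S × B)} {n' : ProbabilityMeasure (S × B)}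
    (hf : ∀ k, IsCouplingOver (f k : Measure (S × (A × B))) (m k) (n k))
    (hm : Tendsto m atTop (𝓝 m')) (hn : Tendsto n atTop (𝓝 n')) :
    ∃ (f' : ProbabilityMeasure (S × (A × B))) (φ : ℕ → ℕ),
      IsCouplingOver (f' : Measure (S × (A × B))) m' n' ∧ StrictMono φ ∧
        Tendsto (f ∘ φ) atTop (𝓝 f') := by
  have hA : Continuous (Prod.map id Prod.fst : S × (A × B) → S × A) := by fun_prop
  have hB : Continuous (Prod.map id Prod.snd : S × (A × B) → S × B) := by fun_prop
  have hm_tight := isTightMeasureSet_range_of_tendsto hm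
  have hn_tight := isTightMeasureSet_range_of_tendsto hn
  have hf_tight : IsTightMeasureSet {x | ∃ P ∈ Set.range f, (P : Measure (S × (A × B))) = x} := by
    refine .prodMk ((hm_tight.map continuous_fst).subset ?_)
      (.prodMk ((hm_tight.map continuous_snd).subset ?_) ((hn_tight.map continuous_snd).subset ?_))
    · rintro _ ⟨_, ⟨_, ⟨k, rfl⟩, rfl⟩, rfl⟩
      refine ⟨_, ⟨k, rfl⟩, ?_⟩
      simp only [← (hf k).1, Measure.fst]
      rw [Measure.map_map measurable_fst hA.measurable]
      rfl
    · rintro _ ⟨_, ⟨_, ⟨_, ⟨k, rfl⟩, rfl⟩, rfl⟩, rfl⟩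
      refine ⟨_, ⟨k, rfl⟩, ?_⟩
      simp only [← (hf k).1, Measure.fst, Measure.snd]
      rw [Measure.map_map measurable_snd hA.measurable,
        Measure.map_map measurable_fst measurable_snd]
      rfl
    · rintro _ ⟨_, ⟨_, ⟨_, ⟨k, rfl⟩, rfl⟩, rfl⟩, rfl⟩
      refine ⟨_, ⟨k, rfl⟩, ?_⟩
      simp only [← (hf k).2, Measure.snd]
      rw [Measure.map_map measurable_snd hB.measurable,
        Measure.map_map measurable_snd measurable_snd]
      rfl
  obtain ⟨f', -, φ, hφ, hlim⟩ := (isCompact_closure_of_isTightMeasureSet hf_tight).tendsto_subseq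
    fun k ↦ subset_closure (Set.mem_range_self k)
  have hf'_m : f'.map hA.measurable.aemeasurable = m' :=
    tendsto_nhds_unique (((ProbabilityMeasure.continuous_map hA).tendsto f').comp hlim)
      ((hm.comp hφ.tendsto_atTop).congr fun k ↦ Subtype.ext (hf (φ k)).1.symm)
  have hf'_n : f'.map hB.measurable.aemeasurable = n' :=
    tendsto_nhds_unique (((ProbabilityMeasure.continuous_map hB).tendsto f').comp hlim)
      ((hn.comp hφ.tendsto_atTop).congr fun k ↦ Subtype.ext (hf (φ k)).2.symm)
  exact ⟨f', φ, ⟨congrArg Subtype.val hf'_m, congrArg Subtype.val hf'_n⟩, hφ, hlim⟩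

lemma WcOver_le_lintegral_Wc (ρ : Measure S) [IsProbabilityMeasure ρ]
    (κ : Kernel S A) (η : Kernel S B) [IsMarkovKernel κ] [IsMarkovKernel η]
    {c : A → B → ℝ≥0∞} (hc : LowerSemicontinuous fun p : A × B ↦ c p.1 p.2) :
    WcOver c (ρ ⊗ₘ κ) (ρ ⊗ₘ η) ≤ ∫⁻ s, Wc c (κ s) (η s) ∂ρ := by
  have : Nonempty S := ρ.nonempty_of_neZero
  have hδ : ∀ n : ℕ, ((n : ℝ≥0∞)⁻¹) ≠ 0 := fun n ↦ ENNReal.inv_ne_zero.2 (ENNReal.natCast_ne_top n)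
  obtain ⟨r, K, hr, hκ, hη, hK, hK_le⟩ := exists_seq_kernel_isCoupling_lintegral_le κ η c hδ
  have : ∀ n, IsMarkovKernel (K n) := fun n ↦ ⟨fun s ↦ (hK n s).isProbabilityMeasure⟩
  obtain ⟨f, φ, hf, hφ, hlim⟩ := IsCouplingOver.exists_subseq_tendsto
    (f := fun n ↦ jointLaw ρ (K n)) (m := fun n ↦ jointLaw ρ (κ.comap (r n) (hr n)))
    (n := fun n ↦ jointLaw ρ (η.comap (r n) (hr n))) (fun n ↦ isCouplingOver_compProd (hK n))
    (tendsto_jointLaw ρ hκ) (tendsto_jointLaw ρ hη)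
  have hcost : ∀ n, ∫⁻ z, c z.2.1 z.2.2 ∂(ρ ⊗ₘ K n) ≤ ∫⁻ s, Wc c (κ s) (η s) ∂ρ + (n : ℝ≥0∞)⁻¹ := by
    intro n
    calc ∫⁻ z, c z.2.1 z.2.2 ∂(ρ ⊗ₘ K n) = ∫⁻ s, ∫⁻ p, c p.1 p.2 ∂K n s ∂ρ :=
          Measure.lintegral_compProd (f := fun z : S × (A × B) ↦ c z.2.1 z.2.2)
            (hc.measurable.comp measurable_snd)
      _ ≤ ∫⁻ s, (Wc c (κ s) (η s) + (n : ℝ≥0∞)⁻¹) ∂ρ := lintegral_mono (hK_le n)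
      _ = ∫⁻ s, Wc c (κ s) (η s) ∂ρ + (n : ℝ≥0∞)⁻¹ := by
        rw [lintegral_add_right _ measurable_const, lintegral_const, measure_univ, mul_one]
  have hbound : Tendsto (fun k ↦ ∫⁻ s, Wc c (κ s) (η s) ∂ρ + (φ k : ℝ≥0∞)⁻¹) atTop
      (𝓝 (∫⁻ s, Wc c (κ s) (η s) ∂ρ)) := by
    simpa only [add_zero, Function.comp_apply] using
      (ENNReal.tendsto_inv_nat_nhds_zero.comp hφ.tendsto_atTop).const_add _
  calc WcOver c (ρ ⊗ₘ κ) (ρ ⊗ₘ η)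
      ≤ ∫⁻ z, c z.2.1 z.2.2 ∂(f : Measure (S × (A × B))) := hf.WcOver_le c
    _ ≤ liminf (fun k ↦ ∫⁻ z, c z.2.1 z.2.2 ∂(ρ ⊗ₘ K (φ k))) atTop :=
      lintegral_le_liminf_lintegral hlim (hc.comp continuous_snd)
    _ ≤ liminf (fun k ↦ ∫⁻ s, Wc c (κ s) (η s) ∂ρ + (φ k : ℝ≥0∞)⁻¹) atTop :=
      liminf_le_liminf (.of_forall fun k ↦ hcost (φ k))
    _ = ∫⁻ s, Wc c (κ s) (η s) ∂ρ := hbound.liminf_eq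

lemma WcOver_compProd (ρ : Measure S) [IsProbabilityMeasure ρ]
    (κ : Kernel S A) (η : Kernel S B) [IsMarkovKernel κ] [IsMarkovKernel η]
    {c : A → B → ℝ≥0∞} (hc : LowerSemicontinuous fun p : A × B ↦ c p.1 p.2) :
    WcOver c (ρ ⊗ₘ κ) (ρ ⊗ₘ η) = ∫⁻ s, Wc c (κ s) (η s) ∂ρ := by
  obtain ⟨s⟩ : Nonempty S := ρ.nonempty_of_neZero
  have : Nonempty A := (κ s).nonempty_of_neZero
  have : Nonempty B := (η s).nonempty_of_neZero
  exact (WcOver_le_lintegral_Wc ρ κ η hc).antisymm (lintegral_Wc_le_WcOver ρ κ η hc.measurable)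

end Topology

end FibredCouplings

section Flows

variable {μ : Measure (X₁ × X₂)} {ν : Measure (Y₁ × Y₂)} {ζ : Measure (Y₁ × X₂)}
  {c₁ : X₁ → Y₁ → ℝ≥0∞} {c₂ : X₂ → Y₂ → ℝ≥0∞}

lemma CT_map_map {Ω Ω' : Type*} [MeasurableSpace Ω] [MeasurableSpace Ω']
    (hc₁ : Measurable fun p : X₁ × Y₁ ↦ c₁ p.1 p.2) (hc₂ : Measurable fun p : X₂ × Y₂ ↦ c₂ p.1 p.2)
    (P : Measure Ω) (P' : Measure Ω') {T : Ω → (X₁ × X₂) × Y₁} {T' : Ω' → X₂ × (Y₁ × Y₂)}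
    (hT : Measurable T) (hT' : Measurable T') :
    CT c₁ c₂ (P.map T, P'.map T') =
      ∫⁻ ω, c₁ (T ω).1.1 (T ω).2 ∂P + ∫⁻ ω, c₂ (T' ω).1 (T' ω).2.2 ∂P' := by
  have h₁ : Measurable fun q : (X₁ × X₂) × Y₁ ↦ c₁ q.1.1 q.2 :=
    hc₁.comp (f := fun q : (X₁ × X₂) × Y₁ ↦ (q.1.1, q.2)) (by fun_prop)
  have h₂ : Measurable fun q : X₂ × (Y₁ × Y₂) ↦ c₂ q.1 q.2.2 :=
    hc₂.comp (f := fun q : X₂ × (Y₁ × Y₂) ↦ (q.1, q.2.2)) (by fun_prop)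
  rw [CT, lintegral_map h₁ hT, lintegral_map h₂ hT']

/-- The cardinal flow of a transport plan: its marginals on `X × Y₁` and on `X₂ × Y`. -/
def flowOfPlan (π : Measure ((X₁ × X₂) × (Y₁ × Y₂))) :
    Measure ((X₁ × X₂) × Y₁) × Measure (X₂ × (Y₁ × Y₂)) :=
  (π.map fun p ↦ (p.1, p.2.1), π.map fun p ↦ (p.1.2, p.2))

lemma CT_flowOfPlan (hc₁ : Measurable fun p : X₁ × Y₁ ↦ c₁ p.1 p.2)
    (hc₂ : Measurable fun p : X₂ × Y₂ ↦ c₂ p.1 p.2) (π : Measure ((X₁ × X₂) × (Y₁ × Y₂))) :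
    CT c₁ c₂ (flowOfPlan π) = ∫⁻ p, (c₁ p.1.1 p.2.1 + c₂ p.1.2 p.2.2) ∂π := by
  have h₁ : Measurable fun p : (X₁ × X₂) × (Y₁ × Y₂) ↦ c₁ p.1.1 p.2.1 :=
    hc₁.comp (f := fun p : (X₁ × X₂) × (Y₁ × Y₂) ↦ (p.1.1, p.2.1)) (by fun_prop)
  rw [lintegral_add_left h₁, flowOfPlan, CT_map_map hc₁ hc₂ π π (by fun_prop) (by fun_prop)]

lemma isCardinalFlow_flowOfPlan_iff {π : Measure ((X₁ × X₂) × (Y₁ × Y₂))} :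
    IsCardinalFlow μ ν (flowOfPlan π).1 (flowOfPlan π).2 ↔ IsCoupling π μ ν := by
  simp only [IsCardinalFlow, IsCoupling, flowOfPlan]
  rw [Measure.map_map (by fun_prop) (by fun_prop), Measure.map_map (by fun_prop) (by fun_prop),
    Measure.map_map (by fun_prop) (by fun_prop), Measure.map_map (by fun_prop) (by fun_prop)]
  exact and_congr_right fun _ ↦ and_iff_left rfl

lemma flowOfPlan_mem_Flows [IsProbabilityMeasure μ] {π : Measure ((X₁ × X₂) × (Y₁ × Y₂))}
    (hπ : IsCoupling π μ ν) : flowOfPlan π ∈ Flows μ ν :=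
  have := hπ.isProbabilityMeasure
  ⟨Measure.isProbabilityMeasure_map (by fun_prop), Measure.isProbabilityMeasure_map (by fun_prop),
    isCardinalFlow_flowOfPlan_iff.2 hπ⟩

lemma exists_eq_flowOfPlan [StandardBorelSpace X₁] [Nonempty X₁] [StandardBorelSpace Y₂]
    [Nonempty Y₂] {f₁ : Measure ((X₁ × X₂) × Y₁)} {f₂ : Measure (X₂ × (Y₁ × Y₂))}
    [IsFiniteMeasure f₁] [IsFiniteMeasure f₂]
    (h : f₁.map (fun p ↦ (p.2, p.1.2)) = f₂.map (fun p ↦ (p.2.1, p.1))) :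
    ∃ π, (f₁, f₂) = flowOfPlan π := by
  let T₁ : (X₁ × X₂) × Y₁ → (Y₁ × X₂) × X₁ := fun p ↦ ((p.2, p.1.2), p.1.1)
  let T₂ : X₂ × (Y₁ × Y₂) → (Y₁ × X₂) × Y₂ := fun p ↦ ((p.2.1, p.1), p.2.2)
  have hT₁ : Measurable T₁ := by fun_prop
  have hT₂ : Measurable T₂ := by fun_prop
  obtain ⟨f, hf₁, hf₂⟩ := exists_isCouplingOver (f₁.map T₁) (f₂.map T₂) <| by
    rwa [Measure.fst, Measure.fst, Measure.map_map measurable_fst hT₁,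
      Measure.map_map measurable_fst hT₂]
  refine ⟨f.map fun z ↦ ((z.2.1, z.1.2), (z.1.1, z.2.2)), Prod.ext ?_ ?_⟩
  · calc f₁ = (f.map (Prod.map id Prod.fst)).map fun w ↦ ((w.2, w.1.2), w.1.1) := by
          rw [hf₁, Measure.map_map (by fun_prop) hT₁]
          exact Measure.map_id.symm
      _ = _ := by
          simp only [flowOfPlan]
          rw [Measure.map_map (by fun_prop) (by fun_prop),
            Measure.map_map (by fun_prop) (by fun_prop)]
          rfl
  · calc f₂ = (f.map (Prod.map id Prod.snd)).map fun w ↦ (w.1.2, (w.1.1, w.2)) := by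
          rw [hf₂, Measure.map_map (by fun_prop) hT₂]
          exact Measure.map_id.symm
      _ = _ := by
          simp only [flowOfPlan]
          rw [Measure.map_map (by fun_prop) (by fun_prop),
            Measure.map_map (by fun_prop) (by fun_prop)]
          rfl

lemma Wc_add_eq_iInf_CT [StandardBorelSpace X₁] [StandardBorelSpace Y₂]
    (μ : Measure (X₁ × X₂)) (ν : Measure (Y₁ × Y₂)) [IsProbabilityMeasure μ]
    (hc₁ : Measurable fun p : X₁ × Y₁ ↦ c₁ p.1 p.2)
    (hc₂ : Measurable fun p : X₂ × Y₂ ↦ c₂ p.1 p.2) :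
    Wc (fun x y ↦ c₁ x.1 y.1 + c₂ x.2 y.2) μ ν = ⨅ F ∈ Flows μ ν, CT c₁ c₂ F := by
  refine le_antisymm (le_iInf₂ fun ⟨f₁, f₂⟩ ⟨hf₁, hf₂, hf⟩ ↦ ?_) (le_iInf₂ fun π hπ ↦ ?_)
  · have : Nonempty X₁ := f₁.nonempty_of_neZero.map fun p ↦ p.1.1
    have : Nonempty Y₂ := f₂.nonempty_of_neZero.map fun p ↦ p.2.2
    obtain ⟨π, hπ⟩ := exists_eq_flowOfPlan hf.2.2
    obtain ⟨rfl, rfl⟩ := Prod.mk.inj hπ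
    exact (Wc_le _ (isCardinalFlow_flowOfPlan_iff.1 hf)).trans_eq (CT_flowOfPlan hc₁ hc₂ π).symm
  · exact (iInf₂_le _ (flowOfPlan_mem_Flows hπ)).trans_eq (CT_flowOfPlan hc₁ hc₂ π)

lemma eq_map_swap_iff {A B : Type*} [MeasurableSpace A] [MeasurableSpace B]
    {m : Measure (A × B)} {n : Measure (B × A)} : m = n.map Prod.swap ↔ m.map Prod.swap = n :=
  (MeasurableEquiv.prodComm.map_apply_eq_iff_map_symm_apply_eq).symm

/-- The cardinal flow whose first half moves mass from `X₁` to `Y₁` over `X₂` according to `f₁`, and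
whose second half moves mass from `X₂` to `Y₂` over `Y₁` according to `f₂`. -/
def flowOfFibred (f₁ : Measure (X₂ × (X₁ × Y₁))) (f₂ : Measure (Y₁ × (X₂ × Y₂))) :
    Measure ((X₁ × X₂) × Y₁) × Measure (X₂ × (Y₁ × Y₂)) :=
  (f₁.map fun z ↦ ((z.2.1, z.1), z.2.2), f₂.map fun z ↦ (z.2.1, (z.1, z.2.2)))

lemma CT_flowOfFibred (hc₁ : Measurable fun p : X₁ × Y₁ ↦ c₁ p.1 p.2)
    (hc₂ : Measurable fun p : X₂ × Y₂ ↦ c₂ p.1 p.2)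
    (f₁ : Measure (X₂ × (X₁ × Y₁))) (f₂ : Measure (Y₁ × (X₂ × Y₂))) :
    CT c₁ c₂ (flowOfFibred f₁ f₂) = ∫⁻ z, c₁ z.2.1 z.2.2 ∂f₁ + ∫⁻ z, c₂ z.2.1 z.2.2 ∂f₂ :=
  CT_map_map hc₁ hc₂ f₁ f₂ (by fun_prop) (by fun_prop)

lemma exists_eq_flowOfFibred (F : Measure ((X₁ × X₂) × Y₁) × Measure (X₂ × (Y₁ × Y₂))) :
    ∃ f₁ f₂, F = flowOfFibred f₁ f₂ := by
  refine ⟨F.1.map fun p ↦ (p.1.2, (p.1.1, p.2)), F.2.map fun p ↦ (p.2.1, (p.1, p.2.2)), ?_⟩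
  rw [flowOfFibred, Measure.map_map (by fun_prop) (by fun_prop),
    Measure.map_map (by fun_prop) (by fun_prop)]
  exact (Prod.ext Measure.map_id Measure.map_id).symm

lemma flowOfFibred_mem_Flows_and_map_eq_iff [IsProbabilityMeasure μ] [IsProbabilityMeasure ζ]
    {f₁ : Measure (X₂ × (X₁ × Y₁))} {f₂ : Measure (Y₁ × (X₂ × Y₂))} :
    flowOfFibred f₁ f₂ ∈ Flows μ ν ∧ (flowOfFibred f₁ f₂).1.map (fun p ↦ (p.2, p.1.2)) = ζ ↔
      IsCouplingOver f₁ (μ.map Prod.swap) (ζ.map Prod.swap) ∧ IsCouplingOver f₂ ζ ν := by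
  have hμ : (flowOfFibred f₁ f₂).1.map Prod.fst = μ ↔
      f₁.map (Prod.map id Prod.fst) = μ.map Prod.swap := by
    rw [eq_map_swap_iff, flowOfFibred, Measure.map_map (by fun_prop) (by fun_prop),
      Measure.map_map (by fun_prop) (by fun_prop)]
    rfl
  have hζ₁ : (flowOfFibred f₁ f₂).1.map (fun p ↦ (p.2, p.1.2)) = ζ ↔
      f₁.map (Prod.map id Prod.snd) = ζ.map Prod.swap := by
    rw [eq_map_swap_iff, flowOfFibred, Measure.map_map (by fun_prop) (by fun_prop),
      Measure.map_map (by fun_prop) (by fun_prop)]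
    rfl
  have hζ₂ : (flowOfFibred f₁ f₂).2.map (fun p ↦ (p.2.1, p.1)) = f₂.map (Prod.map id Prod.fst) :=
    Measure.map_map (by fun_prop) (by fun_prop)
  have hν : (flowOfFibred f₁ f₂).2.map Prod.snd = f₂.map (Prod.map id Prod.snd) :=
    Measure.map_map (by fun_prop) (by fun_prop)
  constructor
  · rintro ⟨⟨-, -, hfμ, hfν, hglue⟩, hfζ⟩
    exact ⟨⟨hμ.1 hfμ, hζ₁.1 hfζ⟩, hζ₂.symm.trans (hglue.symm.trans hfζ), hν.symm.trans hfν⟩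
  · rintro ⟨hf₁, hf₂⟩
    have : IsProbabilityMeasure (μ.map Prod.swap) := Measure.isProbabilityMeasure_map (by fun_prop)
    have := hf₁.isProbabilityMeasure
    have := hf₂.isProbabilityMeasure
    exact ⟨⟨Measure.isProbabilityMeasure_map (by fun_prop),
      Measure.isProbabilityMeasure_map (by fun_prop), hμ.2 hf₁.1, hν.trans hf₂.2,
      (hζ₁.2 hf₁.2).trans (hζ₂.trans hf₂.1).symm⟩, hζ₁.2 hf₁.2⟩

lemma iInf_CT_eq_WcOver_add_WcOver [IsProbabilityMeasure μ] [IsProbabilityMeasure ζ]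
    (hc₁ : Measurable fun p : X₁ × Y₁ ↦ c₁ p.1 p.2) (hc₂ : Measurable fun p : X₂ × Y₂ ↦ c₂ p.1 p.2)
    (hζ : IsPivot μ ν c₁ c₂ ζ) :
    ⨅ F ∈ Flows μ ν, CT c₁ c₂ F =
      WcOver c₁ (μ.map Prod.swap) (ζ.map Prod.swap) + WcOver c₂ ζ ν := by
  refine le_antisymm ?_ ?_
  · simp only [WcOver, ENNReal.iInf_add, ENNReal.add_iInf]
    refine le_iInf₂ fun f₂ hf₂ ↦ le_iInf₂ fun f₁ hf₁ ↦ ?_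
    exact (iInf₂_le _ (flowOfFibred_mem_Flows_and_map_eq_iff.2 ⟨hf₁, hf₂⟩).1).trans_eq
      (CT_flowOfFibred hc₁ hc₂ f₁ f₂)
  · obtain ⟨F, hF, hFζ, hFopt⟩ := hζ
    obtain ⟨f₁, f₂, rfl⟩ := exists_eq_flowOfFibred F
    obtain ⟨hf₁, hf₂⟩ := flowOfFibred_mem_Flows_and_map_eq_iff.1 ⟨hF, hFζ⟩
    rw [← hFopt, CT_flowOfFibred hc₁ hc₂]
    exact add_le_add (hf₁.WcOver_le c₁) (hf₂.WcOver_le c₂)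

end Flows

theorem stmt8_general
    [TopologicalSpace X₁] [PolishSpace X₁] [BorelSpace X₁]
    [TopologicalSpace X₂] [PolishSpace X₂] [BorelSpace X₂]
    [TopologicalSpace Y₁] [PolishSpace Y₁] [BorelSpace Y₁]
    [TopologicalSpace Y₂] [PolishSpace Y₂] [BorelSpace Y₂]
    (μ : Measure (X₁ × X₂)) (ν : Measure (Y₁ × Y₂))
    [IsProbabilityMeasure μ] [IsProbabilityMeasure ν]
    (c₁ : X₁ → Y₁ → ℝ≥0∞) (c₂ : X₂ → Y₂ → ℝ≥0∞)
    (hc₁ : LowerSemicontinuous fun p : X₁ × Y₁ ↦ c₁ p.1 p.2)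
    (hc₂ : LowerSemicontinuous fun p : X₂ × Y₂ ↦ c₂ p.1 p.2)
    (ζ : Measure (Y₁ × X₂)) [IsProbabilityMeasure ζ]
    (hζ : IsPivot μ ν c₁ c₂ ζ)
    (κμ : Kernel X₂ X₁) [IsMarkovKernel κμ]
    (hκμ : μ = ((μ.map Prod.snd) ⊗ₘ κμ).map Prod.swap)
    (κζ₂ : Kernel X₂ Y₁) [IsMarkovKernel κζ₂]
    (hκζ₂ : ζ = ((μ.map Prod.snd) ⊗ₘ κζ₂).map Prod.swap)
    (κζ₁ : Kernel Y₁ X₂) [IsMarkovKernel κζ₁]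
    (hκζ₁ : ζ = (ν.map Prod.fst) ⊗ₘ κζ₁)
    (κν : Kernel Y₁ Y₂) [IsMarkovKernel κν]
    (hκν : ν = (ν.map Prod.fst) ⊗ₘ κν) :
    Wc (fun x y ↦ c₁ x.1 y.1 + c₂ x.2 y.2) μ ν
      = ∫⁻ x₂, Wc c₁ (κμ x₂) (κζ₂ x₂) ∂(μ.map Prod.snd)
        + ∫⁻ y₁, Wc c₂ (κζ₁ y₁) (κν y₁) ∂(ν.map Prod.fst) := by
  have : IsProbabilityMeasure (μ.map Prod.snd) := Measure.isProbabilityMeasure_map (by fun_prop)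
  have : IsProbabilityMeasure (ν.map Prod.fst) := Measure.isProbabilityMeasure_map (by fun_prop)
  calc Wc (fun x y ↦ c₁ x.1 y.1 + c₂ x.2 y.2) μ ν
      = ⨅ F ∈ Flows μ ν, CT c₁ c₂ F := Wc_add_eq_iInf_CT μ ν hc₁.measurable hc₂.measurable
    _ = WcOver c₁ (μ.map Prod.swap) (ζ.map Prod.swap) + WcOver c₂ ζ ν :=
      iInf_CT_eq_WcOver_add_WcOver hc₁.measurable hc₂.measurable hζ
    _ = WcOver c₁ ((μ.map Prod.snd) ⊗ₘ κμ) ((μ.map Prod.snd) ⊗ₘ κζ₂)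
          + WcOver c₂ ((ν.map Prod.fst) ⊗ₘ κζ₁) ((ν.map Prod.fst) ⊗ₘ κν) := by
      rw [eq_map_swap_iff.1 hκμ, eq_map_swap_iff.1 hκζ₂, ← hκζ₁, ← hκν]
    _ = _ := by rw [WcOver_compProd _ κμ κζ₂ hc₁, WcOver_compProd _ κζ₁ κν hc₂]

theorem stmt8
    [TopologicalSpace X₁] [PolishSpace X₁] [BorelSpace X₁]
    [TopologicalSpace X₂] [PolishSpace X₂] [BorelSpace X₂]
    [TopologicalSpace Y₁] [PolishSpace Y₁] [BorelSpace Y₁]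
    [TopologicalSpace Y₂] [PolishSpace Y₂] [BorelSpace Y₂]
    (μ : Measure (X₁ × X₂)) (ν : Measure (Y₁ × Y₂))
    [IsProbabilityMeasure μ] [IsProbabilityMeasure ν]
    (c₁ : X₁ → Y₁ → ℝ≥0∞) (c₂ : X₂ → Y₂ → ℝ≥0∞)
    (hc₁ : Continuous fun p : X₁ × Y₁ => c₁ p.1 p.2)
    (hc₂ : Continuous fun p : X₂ × Y₂ => c₂ p.1 p.2)
    (ζ : Measure (Y₁ × X₂)) [IsProbabilityMeasure ζ]
    (hζ : IsPivot μ ν c₁ c₂ ζ)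
    -- conditional laws (disintegrations) of μ, ζ, ν:
    (κμ : Kernel X₂ X₁) [IsMarkovKernel κμ]
    (hκμ : μ = ((μ.map Prod.snd) ⊗ₘ κμ).map Prod.swap)
    (κζ₂ : Kernel X₂ Y₁) [IsMarkovKernel κζ₂]
    (hκζ₂ : ζ = ((μ.map Prod.snd) ⊗ₘ κζ₂).map Prod.swap)
    (κζ₁ : Kernel Y₁ X₂) [IsMarkovKernel κζ₁]
    (hκζ₁ : ζ = (ν.map Prod.fst) ⊗ₘ κζ₁)
    (κν : Kernel Y₁ Y₂) [IsMarkovKernel κν]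
    (hκν : ν = (ν.map Prod.fst) ⊗ₘ κν) :
    Wc (fun x y => c₁ x.1 y.1 + c₂ x.2 y.2) μ ν
      = ∫⁻ x₂, Wc c₁ (κμ x₂) (κζ₂ x₂) ∂(μ.map Prod.snd)
        + ∫⁻ y₁, Wc c₂ (κζ₁ y₁) (κν y₁) ∂(ν.map Prod.fst) :=
  stmt8_general μ ν c₁ c₂ hc₁.lowerSemicontinuous hc₂.lowerSemicontinuous ζ hζ κμ hκμ κζ₂ hκζ₂
    κζ₁ hκζ₁ κν hκν
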